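/- arXiv:1210.0450 — 6 statements merged into one kernel-verified Lean document; each statement's English description precedes it below -/
import Mathlib

section
/- If n and m are distinct perfect numbers and δ = |n - m|, then δ does not divide n. -/
/-!
Let `d > 0` divide a perfect number `n`, and suppose that `n + d` is perfect too.

If both numbers are even, the Euclid–Euler theorem gives `2 * n < n + d`, so `d > n`. They cannot
both be odd, as `d` would be an even divisor of an odd number. If they have opposite parity and
`1 < d`, then the odd divisor `d` is the Mersenne prime factor `p` of the even one. As
`p ≡ 3 [MOD 4]`, a simple factor `p` of the odd number would make its divisor sum divisible by `4`;
so `p ^ 2` divides the odd number, and properly so since `p ^ 2` is deficient. But `p ^ 2` is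
already at least the even number plus `p`.

There remains `d = 1`. If `r > 2` divides `24`, then `-1` is not a square mod `r`, but every unit
squares to `1`, so the divisors of a number `≡ -1` pair up into sums divisible by `r`; hence no
perfect number is `≡ -1` mod `3` or mod `4`. As every even perfect number except `6` is
`≡ 4 [MOD 12]`, one of any two consecutive perfect numbers would be `≡ -1` mod `3` or mod `4`.
-/

theorem sum_divisors_eq_two_mul_of_perfect {n : ℕ} (hn : n.Perfect) :
    ∑ i ∈ n.divisors, i = 2 * n :=
  (Nat.perfect_iff_sum_divisors_eq_two_mul hn.2).1 hn

theorem units_zmod_sq_eq_one_of_dvd_twenty_four {r : ℕ} (hr : r ∣ 24) (u : (ZMod r)ˣ) :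
    u ^ 2 = 1 := by
  have hr_mem : r ∈ Nat.divisors 24 := by simpa using hr
  rw [show Nat.divisors 24 = {1, 2, 3, 4, 6, 8, 12, 24} by decide] at hr_mem
  simp only [Finset.mem_insert, Finset.mem_singleton] at hr_mem
  rcases hr_mem with rfl | rfl | rfl | rfl | rfl | rfl | rfl | rfl <;> revert u <;> decide

theorem add_eq_zero_and_ne_of_mul_eq_neg_one {r : ℕ} (hr : r ∣ 24) (hr2 : 2 < r) {x y : ZMod r}
    (hxy : x * y = -1) : x + y = 0 ∧ x ≠ y := by
  have hx : IsUnit x := IsUnit.of_mul_eq_one (-y) (by rw [mul_neg, hxy, neg_neg])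
  have hx_sq : x ^ 2 = 1 := by
    simpa using congrArg Units.val (units_zmod_sq_eq_one_of_dvd_twenty_four hr hx.unit)
  refine ⟨by linear_combination x * hxy - y * hx_sq, ?_⟩
  rintro rfl
  have : Fact (2 < r) := ⟨hr2⟩
  exact ZMod.neg_one_ne_one (by rw [← hxy, ← sq, hx_sq])

theorem dvd_sum_divisors_of_dvd_add_one {r n : ℕ} (hr : r ∣ 24) (hr2 : 2 < r) (h : r ∣ n + 1) :
    r ∣ ∑ i ∈ n.divisors, i := by
  have hn : n ≠ 0 := by
    rintro rfl
    have := Nat.le_of_dvd one_pos h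
    omega
  have hn_neg_one : (n : ZMod r) = -1 := by
    rw [eq_neg_iff_add_eq_zero]
    exact_mod_cast (ZMod.natCast_eq_zero_iff (n + 1) r).2 h
  have pairing : ∀ a ∈ n.divisors,
      (a : ZMod r) + (n / a : ℕ) = 0 ∧ (a : ZMod r) ≠ (n / a : ℕ) := fun a ha ↦ by
    refine add_eq_zero_and_ne_of_mul_eq_neg_one hr hr2 ?_
    rw [← Nat.cast_mul, Nat.mul_div_cancel' (Nat.dvd_of_mem_divisors ha), hn_neg_one]
  rw [← ZMod.natCast_eq_zero_iff, Nat.cast_sum]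
  refine Finset.sum_involution (fun a _ ↦ n / a) (fun a ha ↦ (pairing a ha).1) ?_ ?_ ?_
  · exact fun a ha _ hfix ↦ (pairing a ha).2 (congrArg Nat.cast hfix.symm)
  · exact fun a ha ↦ Nat.mem_divisors.2 ⟨Nat.div_dvd_of_dvd (Nat.dvd_of_mem_divisors ha), hn⟩
  · exact fun a ha ↦ Nat.div_div_self (Nat.dvd_of_mem_divisors ha) hn

theorem not_dvd_add_one_of_perfect {r n : ℕ} (hn : n.Perfect) (hr : r ∣ 24) (hr2 : 2 < r) :
    ¬ r ∣ n + 1 := by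
  intro h
  have hsum := dvd_sum_divisors_of_dvd_add_one hr hr2 h
  rw [sum_divisors_eq_two_mul_of_perfect hn] at hsum
  have : r ∣ 2 := (Nat.dvd_add_right hsum).1 (by simpa [mul_add] using h.mul_left 2)
  have := Nat.le_of_dvd two_pos this
  omega

theorem sq_dvd_of_odd_perfect {m p : ℕ} (hm : m.Perfect) (hodd : Odd m) (hp : p.Prime)
    (hp4 : p % 4 = 3) (hpm : p ∣ m) : p ^ 2 ∣ m := by
  obtain ⟨c, rfl⟩ := hpm
  rw [sq]
  refine mul_dvd_mul_left p ?_
  by_contra hpc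
  have hsum := sum_divisors_eq_two_mul_of_perfect hm
  rw [((hp.coprime_iff_not_dvd).2 hpc).sum_divisors_mul, hp.sum_divisors] at hsum
  have h4 : 4 ∣ 2 * (p * c) := hsum ▸ (show 4 ∣ p + 1 by omega).mul_right _
  grind

theorem sq_lt_of_odd_perfect {m p : ℕ} (hm : m.Perfect) (hodd : Odd m) (hp : p.Prime)
    (hp4 : p % 4 = 3) (hpm : p ∣ m) : p ^ 2 < m := by
  refine (Nat.le_of_dvd hm.2 (sq_dvd_of_odd_perfect hm hodd hp hp4 hpm)).lt_of_ne ?_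
  rintro rfl
  exact ((Nat.deficient_iff_not_abundant_and_not_perfect hm.2.ne').1 hp.deficient_pow).2 hm

theorem sum_divisors_two_pow (k : ℕ) : ∑ i ∈ (2 ^ k).divisors, i = mersenne (k + 1) := by
  rw [Nat.sum_divisors_prime_pow Nat.prime_two, mersenne, Nat.geomSum_eq le_rfl]
  simp

theorem exists_eq_two_pow_mul_mersenne_of_even_perfect {n : ℕ} (hn : n.Perfect) (heven : Even n) :
    ∃ k, 1 ≤ k ∧ (mersenne (k + 1)).Prime ∧ n = 2 ^ k * mersenne (k + 1) := by
  obtain ⟨k, m, hm, rfl⟩ := Nat.exists_eq_two_pow_mul_odd hn.2.ne'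
  have hk : 1 ≤ k := by
    by_contra! hk0
    obtain rfl : k = 0 := by omega
    grind
  have hsum : mersenne (k + 1) * (∑ i ∈ m.properDivisors, i + m) = 2 * (2 ^ k * m) := by
    rw [← Nat.sum_divisors_eq_sum_properDivisors_add_self, ← sum_divisors_two_pow,
      ← ((Nat.coprime_two_left.2 hm).pow_left k).sum_divisors_mul,
      sum_divisors_eq_two_mul_of_perfect hn]
  have hm_eq : mersenne (k + 1) * ∑ i ∈ m.properDivisors, i = m := by
    rw [← mul_assoc, ← pow_succ', ← succ_mersenne] at hsum
    linarith
  refine ⟨k, hk, ?_⟩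
  rcases Nat.sum_properDivisors_dvd (Dvd.intro_left _ hm_eq) with hs | hs
  · rw [hs, mul_one] at hm_eq
    rw [hm_eq]
    exact ⟨Nat.sum_properDivisors_eq_one_iff_prime.1 hs, rfl⟩
  · have hmersenne : 1 < mersenne (k + 1) := one_lt_mersenne.2 (by omega)
    rw [hs] at hm_eq
    exact absurd hm_eq (lt_mul_of_one_lt_left hm.pos hmersenne).ne'

theorem two_mul_lt_of_even_perfect {n m : ℕ} (hn : n.Perfect) (hm : m.Perfect) (hn2 : Even n)
    (hm2 : Even m) (hlt : n < m) : 2 * n < m := by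
  obtain ⟨a, -, -, rfl⟩ := exists_eq_two_pow_mul_mersenne_of_even_perfect hn hn2
  obtain ⟨b, -, -, rfl⟩ := exists_eq_two_pow_mul_mersenne_of_even_perfect hm hm2
  have hab : a < b := by
    by_contra! hba
    exact hlt.not_ge <| Nat.mul_le_mul (Nat.pow_le_pow_right two_pos hba)
      (mersenne_le_mersenne.2 (by omega))
  calc 2 * (2 ^ a * mersenne (a + 1)) = 2 ^ (a + 1) * mersenne (a + 1) := by ring
    _ < 2 ^ (a + 1) * mersenne (b + 1) := by gcongr
    _ ≤ 2 ^ b * mersenne (b + 1) := by gcongr <;> omega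

theorem eq_six_or_mod_twelve_eq_four_of_even_perfect {n : ℕ} (hn : n.Perfect) (heven : Even n) :
    n = 6 ∨ n % 12 = 4 := by
  obtain ⟨k, hk, hp, rfl⟩ := exists_eq_two_pow_mul_mersenne_of_even_perfect hn heven
  rcases hk.eq_or_lt with rfl | hk
  · exact .inl rfl
  have hk_odd : Odd (k + 1) := hp.of_mersenne.odd_of_ne_two (by omega)
  have hp3 := mersenne_mod_three hk_odd (by omega)
  have hp8 := mersenne_mod_eight (n := k + 1) (by omega)
  have hpow : 2 * 2 ^ k = mersenne (k + 1) + 1 := by rw [succ_mersenne, pow_succ']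
  have hpow12 : 2 ^ k % 12 = 4 := by omega
  have hp12 : mersenne (k + 1) % 12 = 7 := by omega
  exact .inr (by rw [Nat.mul_mod, hpow12, hp12])

theorem not_perfect_add_one {n : ℕ} (hn : n.Perfect) : ¬ (n + 1).Perfect := by
  intro hn'
  have hn3 := not_dvd_add_one_of_perfect (r := 3) hn (by norm_num) (by norm_num)
  have hn4 := not_dvd_add_one_of_perfect (r := 4) hn (by norm_num) (by norm_num)
  have hn3' := not_dvd_add_one_of_perfect (r := 3) hn' (by norm_num) (by norm_num)
  have hn4' := not_dvd_add_one_of_perfect (r := 4) hn' (by norm_num) (by norm_num)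
  rcases Nat.even_or_odd n with heven | hodd
  · have := eq_six_or_mod_twelve_eq_four_of_even_perfect hn heven
    omega
  · have := eq_six_or_mod_twelve_eq_four_of_even_perfect hn' hodd.add_one
    omega

theorem add_lt_of_common_dvd_of_even_of_odd {n m d : ℕ} (hn : n.Perfect) (hm : m.Perfect)
    (heven : Even n) (hodd : Odd m) (hdn : d ∣ n) (hdm : d ∣ m) (hd : d ≠ 1) : n + d < m := by
  obtain ⟨k, hk, hp, rfl⟩ := exists_eq_two_pow_mul_mersenne_of_even_perfect hn heven
  have hd_coprime : d.Coprime (2 ^ k) :=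
    (Nat.coprime_two_right.2 (hodd.of_dvd_nat hdm)).pow_right k
  obtain rfl : d = mersenne (k + 1) :=
    (hp.eq_one_or_self_of_dvd d (hd_coprime.dvd_of_dvd_mul_left hdn)).resolve_left hd
  have hpow_lt : 2 ^ k + 1 ≤ mersenne (k + 1) := by
    have h2 : 2 ^ 1 ≤ 2 ^ k := Nat.pow_le_pow_right two_pos hk
    have := succ_mersenne (k + 1)
    omega
  calc 2 ^ k * mersenne (k + 1) + mersenne (k + 1) = (2 ^ k + 1) * mersenne (k + 1) := by ring
    _ ≤ mersenne (k + 1) ^ 2 := by rw [sq]; gcongr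
    _ < m := sq_lt_of_odd_perfect hm hodd hp (mersenne_mod_four (by omega)) hdm

theorem not_perfect_add_of_dvd {n d : ℕ} (hn : n.Perfect) (hd : d ≠ 0) (hdn : d ∣ n) :
    ¬ (n + d).Perfect := by
  intro hm
  have hdm : d ∣ n + d := hdn.add dvd_rfl
  have hdn_le : d ≤ n := Nat.le_of_dvd hn.2 hdn
  rcases eq_or_ne d 1 with rfl | hd1
  · exact not_perfect_add_one hn hm
  rcases Nat.even_or_odd n with hn2 | hn2 <;> rcases Nat.even_or_odd (n + d) with hm2 | hm2
  · have := two_mul_lt_of_even_perfect hn hm hn2 hm2 (by omega)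
    omega
  · exact (add_lt_of_common_dvd_of_even_of_odd hn hm hn2 hm2 hdn hdm hd1).false
  · have := add_lt_of_common_dvd_of_even_of_odd hm hn hm2 hn2 hdm hdn hd1
    omega
  · have hd_odd : Odd d := hn2.of_dvd_nat hdn
    exact Nat.not_even_iff_odd.2 hm2 (hn2.add_odd hd_odd)

theorem stmt_0 (n m : ℕ) (hn : Nat.Perfect n) (hm : Nat.Perfect m) (hnm : n ≠ m) :
    ¬ ((n : ℤ) - m).natAbs ∣ n := by
  intro hd
  have hd0 : ((n : ℤ) - m).natAbs ≠ 0 := by omega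
  rcases hnm.lt_or_gt with hlt | hlt
  · have hm_eq : n + ((n : ℤ) - m).natAbs = m := by omega
    exact not_perfect_add_of_dvd hn hd0 hd (hm_eq.symm ▸ hm)
  · have hn_eq : m + ((n : ℤ) - m).natAbs = n := by omega
    have hdm : ((n : ℤ) - m).natAbs ∣ m := (Nat.dvd_add_left dvd_rfl).1 (hn_eq.symm ▸ hd)
    exact not_perfect_add_of_dvd hm hd0 hdm (hn_eq.symm ▸ hn)
end

section
/- No integer δ with δ ≡ 1 (mod 12) or δ ≡ 11 (mod 12) can be the distance between two perfect numbers; that is, if n and m are perfect numbers, then |n - m| is not congruent to ±1 modulo 12. -/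
/-!
A perfect number is congruent to `1`, `4`, `6` or `9` modulo `12`, and no two of these residues
differ by `±1`.

The residues `2` modulo `3` and `3` modulo `4` are excluded by pairing each divisor `d` of `n` with
`n / d`. If `n ≡ -1 (mod k)` and every unit modulo `k` squares to `1`, then `d + n / d ≡ 0 (mod k)`,
and the pairing has no fixed point as soon as `1 ≢ -1`. Hence `k ∣ σ(n)`, whereas a perfect `n`
would have `σ(n) = 2 * n ≡ -2 (mod k)`. The residue `0` modulo `12` is excluded since `12` is
abundant, and `10` since `n ≡ 2 (mod 4)` makes `σ(2) = 3` a divisor of `σ(n) = 2 * n`.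
-/

section Ring

variable {R : Type*} [CommRing R]

theorem add_eq_zero_of_mul_eq_neg_one (hunits : ∀ u : Rˣ, u ^ 2 = 1) {a b : R}
    (hab : a * b = -1) : a + b = 0 := by
  let u : Rˣ := Units.mkOfMulEqOne a (-b) (by rw [mul_neg, hab, neg_neg])
  have ha : a ^ 2 = 1 := congrArg Units.val (hunits u)
  linear_combination a * hab - b * ha

theorem sum_divisors_cast_eq_zero_of_cast_eq_neg_one (htwo : (2 : R) ≠ 0)
    (hunits : ∀ u : Rˣ, u ^ 2 = 1) {n : ℕ} (hn : (n : R) = -1) : ∑ d ∈ n.divisors, (d : R) = 0 := by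
  have pair_sum : ∀ d ∈ n.divisors, (d : R) + (n / d : ℕ) = 0 := fun d hd =>
    add_eq_zero_of_mul_eq_neg_one hunits <| by
      rw [← Nat.cast_mul, Nat.mul_div_cancel' (Nat.dvd_of_mem_divisors hd), hn]
  refine Finset.sum_involution (fun d _ => n / d) pair_sum ?no_fixed_point ?mem ?involutive
  case no_fixed_point =>
    intro d hd _ hfix
    have hsum : (d : R) + d = 0 := by simpa only [hfix] using pair_sum d hd
    have hmul : (d : R) * d = -1 := by
      rw [← hn, ← Nat.mul_div_cancel' (Nat.dvd_of_mem_divisors hd), hfix, Nat.cast_mul]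
    exact htwo (by linear_combination 2 * hmul - (d : R) * hsum)
  case mem =>
    exact fun d hd => Nat.mem_divisors.2
      ⟨Nat.div_dvd_of_dvd (Nat.dvd_of_mem_divisors hd), Nat.ne_zero_of_mem_divisors hd⟩
  case involutive =>
    exact fun d hd => Nat.div_div_self (Nat.dvd_of_mem_divisors hd) (Nat.ne_zero_of_mem_divisors hd)

end Ring

section Perfect

variable {n : ℕ}

theorem sum_divisors_of_perfect (hn : n.Perfect) : ∑ d ∈ n.divisors, d = 2 * n :=
  (Nat.perfect_iff_sum_divisors_eq_two_mul hn.2).1 hn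

theorem cast_ne_neg_one_of_perfect {R : Type*} [CommRing R] (htwo : (2 : R) ≠ 0)
    (hunits : ∀ u : Rˣ, u ^ 2 = 1) (hn : n.Perfect) : (n : R) ≠ -1 := by
  intro hcast
  have hsum : (2 : R) * n = 0 := by
    rw [← sum_divisors_cast_eq_zero_of_cast_eq_neg_one htwo hunits hcast, ← Nat.cast_sum,
      sum_divisors_of_perfect hn, Nat.cast_mul, Nat.cast_ofNat]
  exact htwo (by linear_combination 2 * hcast - hsum)

theorem mod_three_ne_two_of_perfect (hn : n.Perfect) : n % 3 ≠ 2 := fun h =>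
  cast_ne_neg_one_of_perfect (R := ZMod 3) (by decide) (by decide) hn
    ((ZMod.natCast_eq_natCast_iff' n 2 3).2 h)

theorem mod_four_ne_three_of_perfect (hn : n.Perfect) : n % 4 ≠ 3 := fun h =>
  cast_ne_neg_one_of_perfect (R := ZMod 4) (by decide) (by decide) hn
    ((ZMod.natCast_eq_natCast_iff' n 3 4).2 h)

theorem not_dvd_of_abundant_of_perfect {m : ℕ} (hm : m.Abundant) (hn : n.Perfect) : ¬ m ∣ n :=
  fun hmn => (hm.of_dvd hmn hn.2.ne').ne hn.1.symm

theorem sum_divisors_dvd_of_perfect_mul {a b : ℕ} (hab : a.Coprime b) (h : (a * b).Perfect) :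
    ∑ d ∈ a.divisors, d ∣ 2 * (a * b) := by
  rw [← sum_divisors_of_perfect h, hab.sum_divisors_mul]
  exact dvd_mul_right _ _

theorem three_dvd_of_perfect_of_mod_four_eq_two (hn : n.Perfect) (h : n % 4 = 2) : 3 ∣ n := by
  obtain ⟨t, rfl⟩ : 2 ∣ n := by omega
  have hcop : Nat.Coprime 2 t := Nat.coprime_two_left.2 (Nat.odd_iff.2 (by omega))
  have hdvd : 3 ∣ 2 * (2 * t) := sum_divisors_dvd_of_perfect_mul hcop hn
  exact Nat.Coprime.dvd_of_dvd_mul_left (by decide) hdvd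

theorem mod_twelve_of_perfect (hn : n.Perfect) :
    n % 12 = 1 ∨ n % 12 = 4 ∨ n % 12 = 6 ∨ n % 12 = 9 := by
  have h_three := mod_three_ne_two_of_perfect hn
  have h_four := mod_four_ne_three_of_perfect hn
  have h_twelve : ¬ 12 ∣ n := not_dvd_of_abundant_of_perfect Nat.abundant_twelve hn
  have h_two : n % 4 = 2 → 3 ∣ n := three_dvd_of_perfect_of_mod_four_eq_two hn
  omega

end Perfect

theorem stmt_6 (n m : ℕ) (hn : Nat.Perfect n) (hm : Nat.Perfect m) :
    ¬ (((n : ℤ) - m).natAbs % 12 = 1 ∨ ((n : ℤ) - m).natAbs % 12 = 11) := by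
  have hn_mod := mod_twelve_of_perfect hn
  have hm_mod := mod_twelve_of_perfect hm
  omega
end

section
/- Every odd perfect number n satisfies n ≡ 1 (mod 12) or n ≡ 9 (mod 12) (Touchard's theorem). -/
/-!
If `m > 2` divides `24`, then every unit modulo `m` squares to `1`. So if `n ≡ -1 (mod m)`, then
complementary divisors `d` and `n / d` of `n`, having product `-1`, are opposite modulo `m`; they
are also distinct, as `d ^ 2 ≡ 1 ≢ n`, so they cancel in pairs in the sum of divisors and
`m ∣ σ n`. For perfect `n` this reads `0 ≡ 2n ≡ -2`, which is absurd for `m > 2`. Taking `m = 3`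
and `m = 4` leaves only the residues `1` and `9` modulo `12` for odd `n`.
-/

open ArithmeticFunction
open scoped ArithmeticFunction.sigma

theorem sum_divisors_map_eq_zero {R : Type*} [Ring R] (f : ℕ →* R) {n : ℕ}
    (hR : (-1 : R) ≠ 1) (hsq : ∀ d ∈ n.divisors, f d ^ 2 = 1) (hfn : f n = -1) :
    ∑ d ∈ n.divisors, f d = 0 := by
  have mul_compl {d : ℕ} (hd : d ∈ n.divisors) : f d * f (n / d) = -1 := by
    rw [← map_mul, Nat.mul_div_cancel' (Nat.dvd_of_mem_divisors hd), hfn]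
  have map_compl {d : ℕ} (hd : d ∈ n.divisors) : f (n / d) = -f d :=
    calc f (n / d) = f d * (f d * f (n / d)) := by
          rw [← mul_assoc, ← sq, hsq d hd, one_mul]
      _ = -f d := by rw [mul_compl hd, mul_neg_one]
  refine Finset.sum_involution (fun d _ ↦ n / d) (fun d hd ↦ ?_) (fun d hd _ hfix ↦ hR ?_)
    (fun d hd ↦ ?_) (fun d hd ↦ ?_)
  · rw [map_compl hd, add_neg_cancel]
  · calc (-1 : R) = f d * f (n / d) := (mul_compl hd).symm
      _ = 1 := by rw [hfix, ← sq, hsq d hd]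
  · exact Nat.mem_divisors.2
      ⟨Nat.div_dvd_of_dvd (Nat.dvd_of_mem_divisors hd), (Nat.mem_divisors.1 hd).2⟩
  · exact Nat.div_div_self (Nat.dvd_of_mem_divisors hd) (Nat.mem_divisors.1 hd).2

theorem units_zmod_sq_eq_one_of_dvd_twentyFour {m : ℕ} (hm : m ∣ 24) (u : (ZMod m)ˣ) :
    u ^ 2 = 1 := by
  have sq_eq_one : ∀ v : (ZMod 24)ˣ, v ^ 2 = 1 := by decide
  obtain ⟨v, rfl⟩ := ZMod.unitsMap_surjective hm u
  rw [← map_pow, sq_eq_one, map_one]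

theorem dvd_sigma_of_dvd_add_one {m n k : ℕ} (hm : m ∣ 24) (hm2 : 2 < m) (hk : Odd k)
    (hn : m ∣ n + 1) : m ∣ σ k n := by
  have : Fact (2 < m) := ⟨hm2⟩
  have cast_n : (n : ZMod m) = -1 :=
    eq_neg_of_add_eq_zero_left (by exact_mod_cast (ZMod.natCast_eq_zero_iff (n + 1) m).2 hn)
  have cast_sq {d : ℕ} (hd : d ∣ n) : (d : ZMod m) ^ 2 = 1 := by
    have d_unit : IsUnit (d : ZMod m) :=
      isUnit_of_dvd_unit (Nat.cast_dvd_cast hd) (cast_n ▸ isUnit_one.neg)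
    obtain ⟨u, hu⟩ := d_unit
    rw [← hu, ← Units.val_pow_eq_pow_val, units_zmod_sq_eq_one_of_dvd_twentyFour hm,
      Units.val_one]
  let f : ℕ →* ZMod m := (powMonoidHom k).comp (Nat.castRingHom (ZMod m) : ℕ →* ZMod m)
  have f_apply (d : ℕ) : f d = (d : ZMod m) ^ k := rfl
  rw [← ZMod.natCast_eq_zero_iff, sigma_apply]
  push_cast
  refine sum_divisors_map_eq_zero f ZMod.neg_one_ne_one (fun d hd ↦ ?_) ?_
  · rw [f_apply, pow_right_comm, cast_sq (Nat.dvd_of_mem_divisors hd), one_pow]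
  · rw [f_apply, cast_n, hk.neg_one_pow]

theorem not_dvd_add_one_of_perfect_s7 {m n : ℕ} (hm : m ∣ 24) (hm2 : 2 < m) (hn : n.Perfect) :
    ¬ m ∣ n + 1 := by
  intro h
  have dvd_two_mul : m ∣ 2 * n := by
    rw [← (Nat.perfect_iff_sum_divisors_eq_two_mul hn.2).1 hn, ← sigma_one_apply]
    exact dvd_sigma_of_dvd_add_one hm hm2 odd_one h
  have dvd_two : m ∣ 2 := (Nat.dvd_add_right dvd_two_mul).1 (h.mul_left 2)
  exact hm2.not_ge (Nat.le_of_dvd two_pos dvd_two)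

theorem stmt_7 (n : ℕ) (hodd : Odd n) (hn : Nat.Perfect n) :
    n % 12 = 1 ∨ n % 12 = 9 := by
  have not_three_dvd : ¬ 3 ∣ n + 1 := not_dvd_add_one_of_perfect_s7 (by norm_num) (by norm_num) hn
  have not_four_dvd : ¬ 4 ∣ n + 1 := not_dvd_add_one_of_perfect_s7 (by norm_num) (by norm_num) hn
  rw [Nat.odd_iff] at hodd
  omega
end

section
/- There exist infinitely many triangular numbers δ with δ ≡ 3 (mod 12) such that the equation x - y = δ has no solution with x and y both perfect numbers. Precisely, the set of natural numbers δ such that δ = b(b-1)/2 for some natural number b, δ ≡ 3 (mod 12), and there are no perfect numbers x, y with x - y = δ, is infinite. -/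
/-!
Euler's theorem makes every even perfect number hexagonal: it is `M * (2 * M - 1)` with `M = 2 ^ k`.
Take `δ = a * (2 * a - 1)` hexagonal too, with `a ≡ 3 (mod 252)`, and suppose `x - y = δ` with `x`
and `y` perfect. As `δ` is odd, exactly one of `x` and `y` is even.

If `y` is even, then either `x ≡ 3 (mod 4)` or (for `y = 6`) `3` divides `x` exactly once; both are
impossible for an odd perfect number, because they force `4 ∣ σ x = 2 * x`.

If `x = M * (2 * M - 1)` is even, then `y = u * v` with `v = M - a` and `u = 2 * v + (4 * a - 1)`.
When `4 * a - 1` is a power of a prime `p`, the factors `u` and `v` share no prime except possibly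
`p`, and `σ y ≡ 2 (mod 4)` makes `u` or `v` a square up to a power of `p`. Since `u ≡ 5 (mod 8)`, it
is `v`, and then `v` itself is a square as `v ≡ 1 (mod 4)`. But `M ≡ 1, 2 (mod 7)`, so that
`v ≡ 5, 6 (mod 7)` is not a square, except when `M = 4`, `a = 3` and `y = 13`, which is not perfect.
-/

lemma not_isSquare_of_mod_eq {n m r : ℕ} (h : n % m = r) (hr : ¬ IsSquare (r : ZMod m)) :
    ¬ IsSquare n := by
  rw [← h, ZMod.natCast_mod] at hr
  exact fun hn => hr (hn.map (Nat.castRingHom (ZMod m)))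

lemma mod_four_eq_three_of_pow {p j : ℕ} (h : p ^ j % 4 = 3) : p % 4 = 3 := by
  rcases j with _ | j
  · simp at h
  · rw [Nat.pow_mod] at h
    have : p % 4 < 4 := Nat.mod_lt _ (by norm_num)
    interval_cases p % 4 <;> simp [pow_succ] at h ⊢; omega

lemma pow_mod_four_eq_three {p j : ℕ} (hp : p % 4 = 3) (hj : Odd j) : p ^ j % 4 = 3 := by
  obtain ⟨i, rfl⟩ := hj
  rw [Nat.pow_mod, hp, pow_succ, pow_mul, Nat.mul_mod, Nat.pow_mod]
  norm_num

lemma isSquare_pow_mul_of_mod_four_eq_one {p j m : ℕ} (hp : p % 4 = 3) (hm : IsSquare m)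
    (h : p ^ j * m % 4 = 1) : IsSquare (p ^ j * m) := by
  rcases Nat.even_or_odd j with hj | hj
  · exact (hj.isSquare_pow p).mul hm
  · have hm3 : m % 4 = 3 := by
      rw [Nat.mul_mod, pow_mod_four_eq_three hp hj] at h
      omega
    exact absurd hm (not_isSquare_of_mod_eq hm3 (by decide))

lemma two_pow_mod_seven_of_mod_three_ne_two {k : ℕ} (hk : k % 3 ≠ 2) :
    2 ^ k % 7 = 1 ∨ 2 ^ k % 7 = 2 := by
  rw [← Nat.div_add_mod k 3, pow_add, pow_mul, Nat.mul_mod, Nat.pow_mod]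
  have : k % 3 = 0 ∨ k % 3 = 1 := by omega
  rcases this with h | h <;> simp [h]

lemma dvd_sum_divisors_of_not_isSquare {m n : ℕ} (hn : ¬ IsSquare n)
    (h : ∀ d e : ℕ, d * e = n → m ∣ d + e) : m ∣ ∑ d ∈ n.divisors, d := by
  have hn0 : n ≠ 0 := by
    rintro rfl
    exact hn IsSquare.zero
  have mul_div_self {d : ℕ} (hd : d ∈ n.divisors) : d * (n / d) = n :=
    Nat.mul_div_cancel' (Nat.dvd_of_mem_divisors hd)
  rw [← ZMod.natCast_eq_zero_iff, Nat.cast_sum]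
  refine Finset.sum_involution (fun d _ => n / d) (fun d hd => ?_) (fun d hd _ hfix => hn ⟨d, ?_⟩)
    (fun d hd => ?_) (fun d hd => Nat.div_div_self (Nat.dvd_of_mem_divisors hd) hn0)
  · rw [← Nat.cast_add, ZMod.natCast_eq_zero_iff]
    exact h _ _ (mul_div_self hd)
  · simpa only [hfix] using (mul_div_self hd).symm
  · exact Nat.mem_divisors.mpr ⟨Nat.div_dvd_of_dvd (Nat.dvd_of_mem_divisors hd), hn0⟩

lemma two_dvd_sum_divisors {n : ℕ} (hodd : Odd n) (hn : ¬ IsSquare n) :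
    2 ∣ ∑ d ∈ n.divisors, d := by
  refine dvd_sum_divisors_of_not_isSquare hn fun d e hde => ?_
  obtain ⟨hd, he⟩ := Nat.odd_mul.mp (hde ▸ hodd)
  exact (hd.add_odd he).two_dvd

lemma four_dvd_sum_divisors {n : ℕ} (hn : n % 4 = 3) : 4 ∣ ∑ d ∈ n.divisors, d := by
  refine dvd_sum_divisors_of_not_isSquare (not_isSquare_of_mod_eq hn (by decide)) fun d e hde => ?_
  have hmul : (d : ZMod 4) * e = 3 := by
    rw [← Nat.cast_mul, hde, ← ZMod.natCast_mod, hn]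
    rfl
  have key : ∀ z w : ZMod 4, z * w = 3 → z + w = 0 := by decide
  rw [← ZMod.natCast_eq_zero_iff, Nat.cast_add]
  exact key _ _ hmul

lemma not_four_dvd_sum_divisors_of_odd_perfect {n : ℕ} (hodd : Odd n) (hn : Nat.Perfect n) :
    ¬ 4 ∣ ∑ d ∈ n.divisors, d := by
  rw [(Nat.perfect_iff_sum_divisors_eq_two_mul hn.2).mp hn]
  obtain ⟨k, rfl⟩ := hodd
  omega

lemma mod_four_ne_three_of_perfect_mul {q r : ℕ} (hqr : q.Coprime r) (hr : Odd r)
    (h : Nat.Perfect (q * r)) : q % 4 ≠ 3 := by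
  intro hq
  refine not_four_dvd_sum_divisors_of_odd_perfect ((Nat.odd_iff.mpr (by omega)).mul hr) h ?_
  rw [hqr.sum_divisors_mul]
  exact (four_dvd_sum_divisors hq).mul_right _

lemma isSquare_or_isSquare_of_perfect_mul {r m n : ℕ} (hr : r.Coprime (m * n)) (hmn : m.Coprime n)
    (hodd : Odd (r * (m * n))) (h : Nat.Perfect (r * (m * n))) : IsSquare m ∨ IsSquare n := by
  by_contra! hsq
  obtain ⟨hm, hn⟩ := Nat.odd_mul.mp (Nat.odd_mul.mp hodd).2
  refine not_four_dvd_sum_divisors_of_odd_perfect hodd h ?_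
  rw [hr.sum_divisors_mul, hmn.sum_divisors_mul]
  exact (mul_dvd_mul (two_dvd_sum_divisors hm hsq.1) (two_dvd_sum_divisors hn hsq.2)).mul_left _

lemma isSquare_of_perfect_mul {p u v : ℕ} (hp : p.Prime) (hp4 : p % 4 = 3) (hu : u % 8 = 5)
    (hv : v % 4 = 1) (hcommon : ∀ q : ℕ, q.Prime → q ∣ u → q ∣ v → q = p)
    (h : Nat.Perfect (u * v)) : IsSquare v := by
  have hodd : Odd (u * v) := (Nat.odd_iff.mpr (by omega)).mul (Nat.odd_iff.mpr (by omega))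
  have hu_not_sq : ¬ IsSquare u := not_isSquare_of_mod_eq hu (by decide)
  obtain ⟨i, m, hpm, rfl⟩ := Nat.exists_eq_pow_mul_and_not_dvd (n := u) (by omega) p hp.ne_one
  obtain ⟨j, n, hpn, rfl⟩ := Nat.exists_eq_pow_mul_and_not_dvd (n := v) (by omega) p hp.ne_one
  have hmn : m.Coprime n := Nat.coprime_of_dvd fun q hq hqm hqn =>
    hpm (hcommon q hq (hqm.mul_left _) (hqn.mul_left _) ▸ hqm)
  have hpmn : (p ^ (i + j)).Coprime (m * n) :=
    .pow_left _ (hp.coprime_iff_not_dvd.mpr (hp.not_dvd_mul hpm hpn))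
  have hregroup : p ^ i * m * (p ^ j * n) = p ^ (i + j) * (m * n) := by ring
  rw [hregroup] at h hodd
  rcases isSquare_or_isSquare_of_perfect_mul hpmn hmn hodd h with hm | hn
  · exact absurd (isSquare_pow_mul_of_mod_four_eq_one hp4 hm (by omega)) hu_not_sq
  · exact isSquare_pow_mul_of_mod_four_eq_one hp4 hn hv

/-- The `n`-th hexagonal number `n * (2 * n - 1)`, which is the triangular number `b * (b - 1) / 2`
for `b = 2 * n`. With this indexing the even perfect numbers are hexagonal numbers of powers of `2`.
The truncated subtraction at `n = 0` is harmless: `hexagonal 0 = 0`. -/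
def hexagonal (n : ℕ) : ℕ := n * (2 * n - 1)

lemma hexagonal_eq_triangular (n : ℕ) : hexagonal n = 2 * n * (2 * n - 1) / 2 := by
  rw [hexagonal, mul_assoc, Nat.mul_div_cancel_left _ two_pos]

lemma hexagonal_strictMono : StrictMono hexagonal :=
  fun m n hmn => Nat.mul_lt_mul_of_lt_of_le hmn (by omega) (by omega)

lemma hexagonal_add {m : ℕ} (hm : 0 < m) (n : ℕ) :
    hexagonal (m + n) = hexagonal m + (2 * n + (4 * m - 1)) * n := by
  obtain ⟨m, rfl⟩ := Nat.exists_eq_succ_of_ne_zero hm.ne'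
  have h₁ : 2 * (m + 1 + n) - 1 = 2 * m + 2 * n + 1 := by omega
  have h₂ : 2 * (m + 1) - 1 = 2 * m + 1 := by omega
  have h₃ : 4 * (m + 1) - 1 = 4 * m + 3 := by omega
  simp only [hexagonal, Nat.succ_eq_add_one, h₁, h₂, h₃]
  ring

lemma hexagonal_mod_thirty_six {a : ℕ} (ha : a % 36 = 3) : hexagonal a % 36 = 15 := by
  have hb : (2 * a - 1) % 36 = 5 := by omega
  rw [hexagonal, Nat.mul_mod, ha, hb]

lemma mersenne_mul_sum_divisors {k m : ℕ} (hm : Odd m) (h : Nat.Perfect (2 ^ k * m)) :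
    mersenne (k + 1) * ∑ d ∈ m.divisors, d = 2 ^ (k + 1) * m := by
  have hcop : (2 ^ k).Coprime m := hm.coprime_two_left.pow_left k
  have hsum := (Nat.perfect_iff_sum_divisors_eq_two_mul h.2).mp h
  rw [hcop.sum_divisors_mul, Nat.sum_divisors_prime_pow Nat.prime_two,
    Nat.geomSum_eq le_rfl, Nat.div_one] at hsum
  rw [mersenne, hsum, pow_succ']
  ring

lemma prime_of_mul_sum_divisors_eq {c m : ℕ} (hc : 1 < c) (hm : 0 < m)
    (h : c * ∑ d ∈ m.divisors, d = (c + 1) * m) : m.Prime ∧ m = c := by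
  have hdvd : c ∣ m :=
    (Nat.coprime_self_add_right.mpr (Nat.coprime_one_right c)).dvd_of_dvd_mul_left
      (Dvd.intro _ h)
  obtain ⟨j, rfl⟩ := hdvd
  have hproper : ∑ d ∈ (c * j).properDivisors, d = j := by
    rw [Nat.sum_divisors_eq_sum_properDivisors_add_self] at h
    nlinarith
  have hj : j ≠ c * j := by nlinarith
  have hj_one : j = 1 := by
    have hsum : ∑ d ∈ (c * j).properDivisors, d ∣ c * j := by
      rw [hproper]
      exact Nat.dvd_mul_left j c
    simpa only [hproper, hj, or_false] using Nat.sum_properDivisors_dvd hsum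
  subst hj_one
  exact ⟨Nat.sum_properDivisors_eq_one_iff_prime.mp hproper, mul_one c⟩

/-- Euler's half of the Euclid–Euler theorem. -/
theorem exists_eq_hexagonal_two_pow_of_even_perfect {n : ℕ} (heven : Even n)
    (hn : Nat.Perfect n) : ∃ k : ℕ, (mersenne (k + 1)).Prime ∧ n = hexagonal (2 ^ k) := by
  obtain ⟨k, m, hm, rfl⟩ := Nat.exists_eq_two_pow_mul_odd hn.2.ne'
  have hk : k ≠ 0 := by
    rintro rfl
    rw [pow_zero, one_mul] at heven
    exact Nat.not_even_iff_odd.mpr hm heven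
  have hsum := mersenne_mul_sum_divisors hm hn
  rw [← succ_mersenne] at hsum
  obtain ⟨hprime, rfl⟩ :=
    prime_of_mul_sum_divisors_eq (one_lt_mersenne.mpr (by omega)) hm.pos hsum
  refine ⟨k, hprime, ?_⟩
  rw [hexagonal, mersenne, pow_succ']

lemma eq_six_or_exists_eq_hexagonal_of_even_perfect {n : ℕ} (heven : Even n)
    (hn : Nat.Perfect n) :
    n = 6 ∨ ∃ M, n = hexagonal M ∧ 4 ∣ M ∧ (M = 4 ∨ M % 7 = 1 ∨ M % 7 = 2) := by
  obtain ⟨k, hk, rfl⟩ := exists_eq_hexagonal_two_pow_of_even_perfect heven hn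
  have hprime : (k + 1).Prime := .of_mersenne hk
  have hk0 : k ≠ 0 := by
    rintro rfl
    exact Nat.not_prime_one hprime
  by_cases hk1 : k = 1
  · subst hk1
    exact .inl rfl
  refine .inr ⟨2 ^ k, rfl, pow_dvd_pow 2 (show 2 ≤ k by omega), ?_⟩
  by_cases hk3 : 3 ∣ k + 1
  · obtain rfl : k = 2 := by
      have := (Nat.prime_dvd_prime_iff_eq Nat.prime_three hprime).mp hk3
      omega
    exact .inl rfl
  · exact .inr (two_pow_mod_seven_of_mod_three_ne_two (by omega))

lemma not_perfect_even_perfect_add {y δ : ℕ} (hδ : δ % 36 = 15) (heven : Even y)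
    (hy : Nat.Perfect y) : ¬ Nat.Perfect (y + δ) := by
  intro hx
  rcases eq_six_or_exists_eq_hexagonal_of_even_perfect heven hy with rfl | ⟨M, rfl, hM, -⟩
  · obtain ⟨r, hr⟩ : 3 ∣ 6 + δ := by omega
    have hcop : Nat.Coprime 3 r := by
      rw [Nat.prime_three.coprime_iff_not_dvd]
      omega
    rw [hr] at hx
    exact mod_four_ne_three_of_perfect_mul hcop (Nat.odd_iff.mpr (by omega)) hx rfl
  · have hy4 : 4 ∣ hexagonal M := hM.mul_right _
    rw [← mul_one (_ + _)] at hx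
    exact mod_four_ne_three_of_perfect_mul (Nat.coprime_one_right _) odd_one hx (by omega)

lemma isSquare_of_perfect_two_mul_add_mul {a v : ℕ} (ha : a % 4 = 3) (hv : v % 4 = 1)
    (hpow : IsPrimePow (4 * a - 1)) (h : Nat.Perfect ((2 * v + (4 * a - 1)) * v)) :
    IsSquare v := by
  obtain ⟨p, j, hp, -, hpj⟩ := (isPrimePow_nat_iff _).mp hpow
  have hp4 : p % 4 = 3 := mod_four_eq_three_of_pow (j := j) (by omega)
  refine isSquare_of_perfect_mul hp hp4 (by omega) hv (fun q hq hqu hqv => ?_) h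
  have hqp : q ∣ p ^ j := hpj ▸ (Nat.dvd_add_right (hqv.mul_left 2)).mp hqu
  exact (Nat.prime_dvd_prime_iff_eq hq hp).mp (hq.dvd_of_dvd_pow hqp)

lemma not_even_add_hexagonal_of_perfect {a y : ℕ} (ha : a % 252 = 3)
    (hpow : IsPrimePow (4 * a - 1)) (hy : Nat.Perfect y) (hx : Nat.Perfect (y + hexagonal a)) :
    ¬ Even (y + hexagonal a) := by
  intro heven
  have hδ := hexagonal_mod_thirty_six (a := a) (by omega)
  rcases eq_six_or_exists_eq_hexagonal_of_even_perfect heven hx with h6 | ⟨M, hM, hM4, hM7⟩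
  · omega
  have haM : a < M := by
    rw [← hexagonal_strictMono.lt_iff_lt, ← hM]
    exact Nat.lt_add_of_pos_left hy.2
  obtain ⟨v, rfl⟩ := Nat.exists_eq_add_of_le haM.le
  obtain rfl : y = (2 * v + (4 * a - 1)) * v := by
    rw [hexagonal_add (by omega)] at hM
    omega
  rcases hM7 with h4 | h7
  · obtain ⟨rfl, rfl⟩ : a = 3 ∧ v = 1 := by omega
    have not_perfect_thirteen : ¬ Nat.Perfect 13 := by
      simp +decide [Nat.perfect_iff_sum_properDivisors]
    exact not_perfect_thirteen hy
  · have hv : IsSquare v := isSquare_of_perfect_two_mul_add_mul (by omega) (by omega) hpow hy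
    have hv7 : v % 7 = 5 ∨ v % 7 = 6 := by omega
    rcases hv7 with hv5 | hv6
    · exact not_isSquare_of_mod_eq hv5 (by decide) hv
    · exact not_isSquare_of_mod_eq hv6 (by decide) hv

theorem not_exists_perfect_sub_eq_hexagonal {a : ℕ} (ha : a % 252 = 3)
    (hpow : IsPrimePow (4 * a - 1)) :
    ¬ ∃ x y : ℕ, Nat.Perfect x ∧ Nat.Perfect y ∧ x - y = hexagonal a := by
  rintro ⟨x, y, hx, hy, hxy⟩
  have hδ := hexagonal_mod_thirty_six (a := a) (by omega)
  obtain rfl : x = y + hexagonal a := by omega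
  have hodd := not_even_add_hexagonal_of_perfect ha hpow hy hx
  have heven : Even y := by
    rw [Nat.even_iff] at hodd ⊢
    omega
  exact not_perfect_even_perfect_add hδ heven hy hx

lemma infinite_setOf_mod_eq_three_and_isPrimePow :
    {a : ℕ | a % 252 = 3 ∧ IsPrimePow (4 * a - 1)}.Infinite := by
  refine Set.infinite_of_forall_exists_gt fun t => ?_
  -- `11 ^ 12 ≡ 1 (mod 1008)`, where `1008 = 4 * 252`.
  have hmod : 11 ^ (12 * t + 1) % 1008 = 11 := by
    rw [pow_succ, pow_mul, Nat.mul_mod, Nat.pow_mod]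
    norm_num
  have hlt : 12 * t + 1 < 11 ^ (12 * t + 1) := Nat.lt_pow_self (by norm_num)
  obtain ⟨a, ha⟩ : ∃ a, 4 * a - 1 = 11 ^ (12 * t + 1) := ⟨(11 ^ (12 * t + 1) + 1) / 4, by omega⟩
  have h11 : Nat.Prime 11 := by norm_num
  exact ⟨a, ⟨by omega, ha ▸ h11.isPrimePow.pow (Nat.succ_ne_zero _)⟩, by omega⟩

theorem stmt_10 :
    {δ : ℕ | (∃ b : ℕ, δ = b * (b - 1) / 2) ∧ δ % 12 = 3 ∧
      ¬ ∃ x y : ℕ, Nat.Perfect x ∧ Nat.Perfect y ∧ x - y = δ}.Infinite := by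
  refine (infinite_setOf_mod_eq_three_and_isPrimePow.image
    hexagonal_strictMono.injective.injOn).mono ?_
  rintro _ ⟨a, ⟨ha, hpow⟩, rfl⟩
  have hδ := hexagonal_mod_thirty_six (a := a) (by omega)
  exact ⟨⟨2 * a, hexagonal_eq_triangular a⟩, by omega, not_exists_perfect_sub_eq_hexagonal ha hpow⟩
end

section
/- Let s be a natural number with s ≢ 2 (mod 3), let m = 12s + 11 and δ = (24s+23)(48s+45). If n and n + δ are both perfect numbers, then n is odd and there exists a prime p such that 2^p - 1 is prime, n + δ = 2^(p-1)·(2^p - 1), and n = (2^(p-1) - (2m+1))·(2^p + 4m + 1). -/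
/-!
Let `r = 2m + 1`, where `m = 12s + 11`, so that `δ = r(2r - 1) ≡ 3 (mod 4)`. If `n` were even,
`N = n + δ` would be an odd perfect number, so that `4 ∤ 2N = σ(N)`. But by Euler's theorem `4 ∣ n`
or `n = 6`. In the first case `N ≡ 3 (mod 4)`, so the sum of any two complementary divisors of `N`
is divisible by `4`, and so is `σ(N)`. In the second case `s ≢ 2 (mod 3)` means that `3` divides `N`
exactly once, whence `4 = σ(3)` divides `σ(N)`. So `n` is odd and `N` is even. By Euler's theorem
`N = q(2q - 1)` with `q = 2^(p-1)`, and the difference `n = q(2q - 1) - r(2r - 1)` factors.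
-/

open ArithmeticFunction
open scoped ArithmeticFunction.sigma

section SumOfDivisors

theorem sigma_one_eq_two_mul_of_perfect {n : ℕ} (hn : n.Perfect) : σ 1 n = 2 * n :=
  (sigma_one_apply n).trans ((Nat.perfect_iff_sum_divisors_eq_two_mul hn.2).1 hn)

theorem sigma_one_prime {p : ℕ} (hp : p.Prime) : σ 1 p = p + 1 := by
  rw [sigma_one_apply, hp.sum_divisors, add_comm]

theorem sigma_one_two_pow (k : ℕ) : σ 1 (2 ^ k) = mersenne (k + 1) := by
  rw [sigma_one_apply_prime_pow Nat.prime_two, Nat.geomSum_eq le_rfl, Nat.div_one, mersenne]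

theorem add_one_dvd_sigma_one_prime_mul {p a : ℕ} (hp : p.Prime) (ha : ¬ p ∣ a) :
    p + 1 ∣ σ 1 (p * a) := by
  have hcoprime : p.Coprime a := hp.coprime_iff_not_dvd.2 ha
  rw [isMultiplicative_sigma.map_mul_of_coprime hcoprime, sigma_one_prime hp]
  exact dvd_mul_right _ _

theorem dvd_sigma_one_of_forall_dvd_add {k n : ℕ} (hn : ¬ IsSquare n)
    (h : ∀ d e, d * e = n → k ∣ d + e) : k ∣ σ 1 n := by
  have hsum : σ 1 n = ∑ x ∈ n.divisorsAntidiagonal, x.1 :=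
    (sigma_one_apply n).trans (Nat.sum_divisorsAntidiagonal fun d _ ↦ d).symm
  rw [hsum, ← ZMod.natCast_eq_zero_iff, Nat.cast_sum]
  refine Finset.sum_involution (fun x _ ↦ x.swap) ?cancel ?ne_swap ?mem (fun _ _ ↦ Prod.swap_swap _)
  case cancel =>
    intro x hx
    have hdvd : k ∣ x.1 + x.2 := h _ _ (Nat.mem_divisorsAntidiagonal.1 hx).1
    rw [Prod.fst_swap, ← Nat.cast_add, ZMod.natCast_eq_zero_iff]
    exact hdvd
  case ne_swap =>
    rintro ⟨d, e⟩ hx - hswap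
    obtain rfl : e = d := congrArg Prod.fst hswap
    exact hn ⟨e, (Nat.mem_divisorsAntidiagonal.1 hx).1.symm⟩
  case mem => exact fun _ hx ↦ Nat.swap_mem_divisorsAntidiagonal.2 hx

theorem four_dvd_add_of_mul_mod_four_eq_three {d e : ℕ} (h : d * e % 4 = 3) : 4 ∣ d + e := by
  have key : ∀ a b : ZMod 4, a * b = 3 → a + b = 0 := by decide
  rw [← ZMod.natCast_eq_zero_iff, Nat.cast_add]
  apply key
  rw [← Nat.cast_mul]
  exact (ZMod.natCast_eq_natCast_iff' _ 3 4).2 h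

theorem four_dvd_sigma_one_of_mod_four_eq_three {n : ℕ} (hn : n % 4 = 3) : 4 ∣ σ 1 n := by
  refine dvd_sigma_one_of_forall_dvd_add ?_ ?_
  · rintro ⟨d, rfl⟩
    have hfour : 4 ∣ d + d := four_dvd_add_of_mul_mod_four_eq_three hn
    have htwo : 2 ∣ d * d := Dvd.dvd.mul_right (by omega) d
    omega
  · rintro d e rfl
    exact four_dvd_add_of_mul_mod_four_eq_three hn

end SumOfDivisors

section EvenPerfect

theorem eq_one_and_prime_of_sum_properDivisors_mul_eq {a b : ℕ} (ha : 1 < a) (hb : 0 < b)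
    (h : ∑ d ∈ (a * b).properDivisors, d = b) : b = 1 ∧ a.Prime := by
  have hdvd : ∑ d ∈ (a * b).properDivisors, d ∣ a * b := by
    rw [h]
    exact dvd_mul_left b a
  rcases Nat.sum_properDivisors_dvd hdvd with hone | hself
  · obtain rfl : b = 1 := h.symm.trans hone
    rw [mul_one, Nat.sum_properDivisors_eq_one_iff_prime] at hone
    exact ⟨rfl, hone⟩
  · have hlt : b < a * b := (Nat.lt_mul_iff_one_lt_left hb).2 ha
    exact absurd (h.symm.trans hself) hlt.ne

theorem exists_eq_two_pow_mul_mersenne_of_even_of_perfect {n : ℕ} (heven : Even n)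
    (hn : n.Perfect) : ∃ k, (mersenne (k + 1)).Prime ∧ n = 2 ^ k * mersenne (k + 1) := by
  obtain ⟨k, m, hm, rfl⟩ := Nat.exists_eq_two_pow_mul_odd hn.2.ne'
  have hk : k ≠ 0 := by
    rintro rfl
    rw [pow_zero, one_mul] at heven
    exact Nat.not_even_iff_odd.2 hm heven
  have hσ : mersenne (k + 1) * σ 1 m = (mersenne (k + 1) + 1) * m := by
    have hcoprime : (2 ^ k).Coprime m := hm.coprime_two_left.pow_left k
    rw [← sigma_one_two_pow, ← isMultiplicative_sigma.map_mul_of_coprime hcoprime,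
      sigma_one_eq_two_mul_of_perfect hn, sigma_one_two_pow, succ_mersenne]
    ring
  have hM : 1 < mersenne (k + 1) := one_lt_mersenne.2 (by omega)
  obtain ⟨j, rfl⟩ : mersenne (k + 1) ∣ m :=
    (Nat.coprime_self_add_right.2 (Nat.coprime_one_right _)).dvd_of_dvd_mul_left ⟨_, hσ.symm⟩
  have hsum : ∑ d ∈ (mersenne (k + 1) * j).properDivisors, d = j := by
    have hσj : σ 1 (mersenne (k + 1) * j) = (mersenne (k + 1) + 1) * j :=
      Nat.eq_of_mul_eq_mul_left (by omega) (hσ.trans (mul_left_comm _ _ _))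
    rw [sigma_one_apply, Nat.sum_divisors_eq_sum_properDivisors_add_self] at hσj
    linarith
  have hj : 0 < j := Nat.pos_of_mul_pos_left hm.pos
  obtain ⟨rfl, hprime⟩ := eq_one_and_prime_of_sum_properDivisors_mul_eq hM hj hsum
  exact ⟨k, hprime, by rw [mul_one]⟩

theorem eq_six_or_four_dvd_of_even_of_perfect {n : ℕ} (heven : Even n) (hn : n.Perfect) :
    n = 6 ∨ 4 ∣ n := by
  obtain ⟨k, hprime, rfl⟩ := exists_eq_two_pow_mul_mersenne_of_even_of_perfect heven hn
  match k with
  | 0 => exact absurd hprime Nat.not_prime_one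
  | 1 => exact .inl rfl
  | k + 2 => exact .inr ((pow_dvd_pow 2 (Nat.le_add_left 2 k)).mul_right _)

end EvenPerfect

section OddPerfect

theorem not_four_dvd_sigma_one_of_odd_of_perfect {n : ℕ} (hodd : Odd n) (hn : n.Perfect) :
    ¬ 4 ∣ σ 1 n := by
  rw [sigma_one_eq_two_mul_of_perfect hn]
  have hmod : n % 2 = 1 := Nat.odd_iff.1 hodd
  omega

theorem mod_four_eq_one_of_odd_of_perfect {n : ℕ} (hodd : Odd n) (hn : n.Perfect) : n % 4 = 1 := by
  refine (Nat.odd_mod_four_iff.1 (Nat.odd_iff.1 hodd)).resolve_right fun h ↦ ?_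
  exact not_four_dvd_sigma_one_of_odd_of_perfect hodd hn (four_dvd_sigma_one_of_mod_four_eq_three h)

theorem sq_dvd_of_prime_of_dvd_of_odd_of_perfect {p n : ℕ} (hp : p.Prime) (hp4 : p % 4 = 3)
    (hpn : p ∣ n) (hodd : Odd n) (hn : n.Perfect) : p ^ 2 ∣ n := by
  obtain ⟨a, rfl⟩ := hpn
  rw [sq, Nat.mul_dvd_mul_iff_left hp.pos]
  by_contra ha
  have hfour : 4 ∣ p + 1 := by omega
  exact not_four_dvd_sigma_one_of_odd_of_perfect hodd hn
    (hfour.trans (add_one_dvd_sigma_one_prime_mul hp ha))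

end OddPerfect

section PerfectPairs

theorem odd_of_perfect_of_perfect_add {n δ : ℕ} (hδ4 : δ % 4 = 3) (hδ3 : 3 ∣ δ) (hδ9 : δ % 9 ≠ 3)
    (hn : n.Perfect) (hnδ : (n + δ).Perfect) : Odd n := by
  by_contra hnodd
  have heven : Even n := Nat.not_odd_iff_even.1 hnodd
  have hodd : Odd (n + δ) := heven.add_odd (Nat.odd_iff.2 (by omega))
  rcases eq_six_or_four_dvd_of_even_of_perfect heven hn with rfl | hfour
  · have hnine : 3 ^ 2 ∣ 6 + δ :=
      sq_dvd_of_prime_of_dvd_of_odd_of_perfect Nat.prime_three rfl (by omega) hodd hnδ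
    omega
  · have hmod : (n + δ) % 4 = 1 := mod_four_eq_one_of_odd_of_perfect hodd hnδ
    omega

theorem mul_two_mul_sub_one_sub_mul_two_mul_sub_one {R : Type*} [CommRing R] (x y : R) :
    x * (2 * x - 1) - y * (2 * y - 1) = (x - y) * (2 * x + 2 * y - 1) := by
  ring

theorem stmt_14_general {m n : ℕ} (hm : Odd m) (hm3 : ¬ 3 ∣ m) (hm9 : m % 9 < 6)
    (hn : n.Perfect) (hnδ : (n + (2 * m + 1) * (4 * m + 1)).Perfect) :
    Odd n ∧ ∃ p : ℕ, p.Prime ∧ (2 ^ p - 1).Prime ∧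
      n + (2 * m + 1) * (4 * m + 1) = 2 ^ (p - 1) * (2 ^ p - 1) ∧
      (n : ℤ) = (2 ^ (p - 1) - (2 * m + 1)) * (2 ^ p + 4 * m + 1) := by
  have hδ4 : (2 * m + 1) * (4 * m + 1) % 4 = 3 := by
    obtain ⟨r, rfl⟩ := hm
    ring_nf
    omega
  have hδ9 : (2 * m + 1) * (4 * m + 1) % 9 = 0 ∨ (2 * m + 1) * (4 * m + 1) % 9 = 6 := by
    have hcases : m % 9 = 1 ∨ m % 9 = 2 ∨ m % 9 = 4 ∨ m % 9 = 5 := by omega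
    rcases hcases with h | h | h | h <;> simp [Nat.mul_mod, Nat.add_mod, h]
  have hodd : Odd n := odd_of_perfect_of_perfect_add hδ4 (by omega) (by omega) hn hnδ
  have heven : Even (n + (2 * m + 1) * (4 * m + 1)) :=
    hodd.add_odd (Nat.odd_iff.2 (by omega))
  obtain ⟨k, hprime, hN⟩ := exists_eq_two_pow_mul_mersenne_of_even_of_perfect heven hnδ
  refine ⟨hodd, k + 1, hprime.of_mersenne, hprime, hN, ?_⟩
  have hNℤ : (n : ℤ) + (2 * m + 1) * (4 * m + 1) = 2 ^ k * (2 * 2 ^ k - 1) := by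
    have hmersenne : (mersenne (k + 1) : ℤ) = 2 * 2 ^ k - 1 := by
      rw [← pow_succ', eq_sub_iff_add_eq]
      exact_mod_cast succ_mersenne (k + 1)
    rw [← hmersenne]
    exact_mod_cast hN
  rw [Nat.add_sub_cancel, pow_succ']
  linear_combination hNℤ + mul_two_mul_sub_one_sub_mul_two_mul_sub_one (2 ^ k : ℤ) (2 * m + 1)

end PerfectPairs

theorem stmt_14 (s n : ℕ) (hs : s % 3 ≠ 2)
    (hn : Nat.Perfect n) (hnδ : Nat.Perfect (n + (24 * s + 23) * (48 * s + 45))) :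
    Odd n ∧ ∃ p : ℕ, Nat.Prime p ∧ Nat.Prime (2 ^ p - 1) ∧
      n + (24 * s + 23) * (48 * s + 45) = 2 ^ (p - 1) * (2 ^ p - 1) ∧
      (n : ℤ) = (2 ^ (p - 1) - (2 * (12 * s + 11 : ℕ) + 1)) *
        (2 ^ p + 4 * (12 * s + 11 : ℕ) + 1) := by
  have hδ : (24 * s + 23) * (48 * s + 45) = (2 * (12 * s + 11) + 1) * (4 * (12 * s + 11) + 1) := by
    ring
  rw [hδ] at hnδ ⊢
  exact stmt_14_general (Nat.odd_iff.2 (by omega)) (by omega) (by omega) hn hnδ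
end

section
/- If p is an odd natural number and x is a natural number such that 2^(p-1) - 15 = x^2, then p = 5 or p = 7. -/
/-!
Modulo 3 the equation says that a power of the non-square 2 is a square, so the exponent is even,
say `2 * k`. Then `15 = (2 ^ k) ^ 2 - x ^ 2` is a difference of two distinct squares, which forces
`2 ^ k + |x| ≤ 15` and hence `k ≤ 3`, while `15 ≤ (2 ^ k) ^ 2` gives `2 ≤ k`.
-/

theorem even_of_isSquare_pow {G₀ : Type*} [CommGroupWithZero G₀] {a : G₀} {n : ℕ}
    (ha : ¬IsSquare a) (h : IsSquare (a ^ n)) : Even n := by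
  by_contra hn
  obtain ⟨k, rfl⟩ := Nat.not_even_iff_odd.mp hn
  have ha₀ : a ≠ 0 := fun h₀ => ha (h₀ ▸ IsSquare.zero)
  have a_eq : a = a ^ (2 * k + 1) / a ^ (2 * k) := by
    rw [pow_succ', mul_div_cancel_right₀ a (pow_ne_zero _ ha₀)]
  exact ha (a_eq ▸ h.div ((even_two_mul k).isSquare_pow a))

theorem abs_add_abs_le_abs_sq_sub_sq {x y : ℤ} (h : y ^ 2 ≠ x ^ 2) :
    |y| + |x| ≤ |y ^ 2 - x ^ 2| := by
  have dvd : |y| + |x| ∣ y ^ 2 - x ^ 2 := by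
    rw [← sq_abs y, ← sq_abs x, sq_sub_sq]
    exact dvd_mul_right _ _
  exact Int.le_of_dvd (abs_pos.mpr (sub_ne_zero.mpr h)) ((dvd_abs _ _).mpr dvd)

theorem even_of_two_pow_sub_fifteen_eq_sq {n : ℕ} {x : ℤ} (h : (2 : ℤ) ^ n - 15 = x ^ 2) :
    Even n := by
  have two_not_isSquare : ¬IsSquare (2 : ZMod 3) := by decide
  have two_pow_eq : (2 : ZMod 3) ^ n = (x : ZMod 3) ^ 2 := by
    have h_cast := congrArg (Int.cast : ℤ → ZMod 3) h
    push_cast at h_cast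
    rwa [show (15 : ZMod 3) = 0 from rfl, sub_zero] at h_cast
  exact even_of_isSquare_pow two_not_isSquare (two_pow_eq ▸ IsSquare.sq _)

theorem eq_two_or_three_of_two_pow_sq_sub_fifteen_eq_sq {k : ℕ} {x : ℤ}
    (h : ((2 : ℤ) ^ k) ^ 2 - 15 = x ^ 2) : k = 2 ∨ k = 3 := by
  have diff_eq : ((2 : ℤ) ^ k) ^ 2 - x ^ 2 = 15 := by linarith
  have sq_ne : ((2 : ℤ) ^ k) ^ 2 ≠ x ^ 2 := sub_ne_zero.mp (by norm_num [diff_eq])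
  have sum_le : (2 : ℤ) ^ k + |x| ≤ 15 := by
    simpa [diff_eq] using abs_add_abs_le_abs_sq_sub_sq sq_ne
  have two_pow_lt : (2 : ℤ) ^ k < 2 ^ 4 := by linarith [abs_nonneg x]
  have k_lt : k < 4 := (pow_lt_pow_iff_right₀ one_lt_two).mp two_pow_lt
  have fifteen_le : 15 ≤ ((2 : ℤ) ^ k) ^ 2 := by linarith [sq_nonneg x]
  interval_cases k <;> lia

theorem stmt_19_general (p : ℕ) (x : ℤ) (hx : (2 : ℤ) ^ (p - 1) - 15 = x ^ 2) :
    p = 5 ∨ p = 7 := by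
  obtain ⟨k, hk⟩ := (even_of_two_pow_sub_fifteen_eq_sq hx).two_dvd
  rw [hk, mul_comm, pow_mul] at hx
  rcases eq_two_or_three_of_two_pow_sq_sub_fifteen_eq_sq hx with rfl | rfl <;> lia

theorem stmt_19 (p x : ℕ) (hp : Odd p) (hx : (2 : ℤ) ^ (p - 1) - 15 = x ^ 2) :
    p = 5 ∨ p = 7 :=
  stmt_19_general p x hx
end
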